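/- arXiv:2605.18051 — 5 statements merged into one kernel-verified Lean document; each statement's English description precedes it below -/
import Mathlib

section
/- Let f : ℝ → ℝ be twice continuously differentiable on (0,∞) with f''(x) > 0 for all x > 0 and f(1) = 0, and define d_f(s) = ((1-s)/2)·f((1+s)/(1-s)) + ((1+s)/2)·f((1-s)/(1+s)) for s ∈ [0,1). Then d_f is strictly monotonically increasing on [0,1): for all s, t with 0 ≤ s < t < 1, d_f(s) < d_f(t). -/
/-- The binary symmetric f-divergence. -/
noncomputable def binDiv (f : ℝ → ℝ) (s : ℝ) : ℝ :=
  ((1 - s) / 2) * f ((1 + s) / (1 - s)) + ((1 + s) / 2) * f ((1 - s) / (1 + s))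

/-!
With `g p = (1 - p) f(p / (1 - p))`, the divergence is `d_f(s) = g((1 + s)/2) + g((1 - s)/2)`.
The perspective `(v, x) ↦ v f(x / v)` of a strictly convex `f` is strictly convex except along rays
through the origin, and the line `v + x = 1` meets each ray at most once, so `g` is strictly convex.
Spreading two points apart while keeping their midpoint then increases the sum of the values of `g`.
-/

open Set

section Perspective

variable {𝕜 E β : Type*} [Field 𝕜] [AddCommGroup E] [Module 𝕜 E] [AddCommMonoid β] [Module 𝕜 β]

/-- The perspective of `f`, the degree-one homogeneous extension of `f` from the slice `v = 1`.
It is meant for `v > 0`; at `v = 0` it takes the junk value `0`. -/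
def perspective (f : E → β) (v : 𝕜) (x : E) : β :=
  v • f (v⁻¹ • x)

theorem mul_inv_smul_smul {c : 𝕜} (hc : c ≠ 0) (v : 𝕜) (x : E) :
    (c * v)⁻¹ • c • x = v⁻¹ • x := by
  rw [smul_smul, mul_inv_rev, inv_mul_cancel_right₀ hc]

theorem perspective_mul_smul (f : E → β) {c : 𝕜} (hc : c ≠ 0) (v : 𝕜) (x : E) :
    perspective f (c * v) (c • x) = c • perspective f v x := by
  rw [perspective, perspective, mul_inv_smul_smul hc, mul_smul]

variable [LinearOrder 𝕜] [IsStrictOrderedRing 𝕜] [PartialOrder β] [PosSMulStrictMono 𝕜 β]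

theorem perspective_add_lt {S : Set E} {f : E → β} (hf : StrictConvexOn 𝕜 S f) {v w : 𝕜}
    {x y : E} (hv : 0 < v) (hw : 0 < w) (hx : v⁻¹ • x ∈ S) (hy : w⁻¹ • y ∈ S)
    (hxy : v⁻¹ • x ≠ w⁻¹ • y) :
    perspective f (v + w) (x + y) < perspective f v x + perspective f w y := by
  have hvw : 0 < v + w := add_pos hv hw
  have hmean : (v + w)⁻¹ • (x + y) =
      (v / (v + w)) • v⁻¹ • x + (w / (v + w)) • w⁻¹ • y := by
    match_scalars <;> field_simp
  calc (v + w) • f ((v + w)⁻¹ • (x + y))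
      < (v + w) • ((v / (v + w)) • f (v⁻¹ • x) + (w / (v + w)) • f (w⁻¹ • y)) := by
        rw [hmean]
        exact smul_lt_smul_of_pos_left ((strictConvexOn_iff_div.1 hf).2 hx hy hxy hv hw) hvw
    _ = v • f (v⁻¹ • x) + w • f (w⁻¹ • y) := by
        rw [smul_add, smul_smul, smul_smul, mul_div_cancel₀ _ hvw.ne', mul_div_cancel₀ _ hvw.ne']

theorem perspective_mul_add_mul_lt {S : Set E} {f : E → β} (hf : StrictConvexOn 𝕜 S f)
    {v w a b : 𝕜} {x y : E} (hv : 0 < v) (hw : 0 < w) (hx : v⁻¹ • x ∈ S) (hy : w⁻¹ • y ∈ S)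
    (hxy : v⁻¹ • x ≠ w⁻¹ • y) (ha : 0 < a) (hb : 0 < b) :
    perspective f (a * v + b * w) (a • x + b • y) <
      a • perspective f v x + b • perspective f w y := by
  rw [← perspective_mul_smul f ha.ne', ← perspective_mul_smul f hb.ne']
  apply perspective_add_lt hf (mul_pos ha hv) (mul_pos hb hw) <;>
    simpa only [mul_inv_smul_smul ha.ne', mul_inv_smul_smul hb.ne']

theorem strictConvexOn_perspective_one_sub {f : 𝕜 → β} (hf : StrictConvexOn 𝕜 (Ioi 0) f) :
    StrictConvexOn 𝕜 (Ioo 0 1) fun p ↦ perspective f (1 - p) p := by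
  refine ⟨convex_Ioo 0 1, fun p ⟨hp₀, hp₁⟩ q ⟨hq₀, hq₁⟩ hpq a b ha hb hab ↦ ?_⟩
  have hp : 0 < 1 - p := sub_pos.2 hp₁
  have hq : 0 < 1 - q := sub_pos.2 hq₁
  have odds_ne : (1 - p)⁻¹ • p ≠ (1 - q)⁻¹ • q := by
    intro h
    simp only [smul_eq_mul] at h
    field_simp at h
    exact hpq (by linarith)
  have hcompl : 1 - (a • p + b • q) = a * (1 - p) + b * (1 - q) := by
    simp only [smul_eq_mul]
    linear_combination -hab
  simpa only [hcompl] using perspective_mul_add_mul_lt hf hp hq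
    (smul_pos (inv_pos.2 hp) hp₀) (smul_pos (inv_pos.2 hq) hq₀) odds_ne ha hb

end Perspective

theorem map_add_map_lt_of_mem_openSegment {𝕜 E β : Type*} [CommRing 𝕜] [PartialOrder 𝕜]
    [AddCommGroup E] [Module 𝕜 E] [AddCommMonoid β] [PartialOrder β] [IsOrderedCancelAddMonoid β]
    [Module 𝕜 β] {S : Set E} {g : E → β} (hg : StrictConvexOn 𝕜 S g) {l r x y : E}
    (hl : l ∈ S) (hr : r ∈ S) (hlr : l ≠ r) (hx : x ∈ openSegment 𝕜 l r) (hxy : x + y = l + r) :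
    g x + g y < g l + g r := by
  obtain ⟨a, b, ha, hb, hab, rfl⟩ := hx
  have hy : y = b • l + a • r := by
    rw [eq_sub_of_add_eq' hxy, eq_sub_of_add_eq' hab]
    module
  calc g (a • l + b • r) + g y
      < (a • g l + b • g r) + (b • g l + a • g r) :=
        add_lt_add (hg.2 hl hr hlr ha hb hab)
          (hy ▸ hg.2 hl hr hlr hb ha (by rwa [add_comm]))
    _ = (a + b) • (g l + g r) := by module
    _ = g l + g r := by rw [hab, one_smul]

theorem binDiv_eq_perspective_add_perspective (f : ℝ → ℝ) (s : ℝ) :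
    binDiv f s = perspective f (1 - (1 + s) / 2) ((1 + s) / 2) +
      perspective f (1 - (1 - s) / 2) ((1 - s) / 2) := by
  have hplus : 1 - (1 + s) / 2 = (1 - s) / 2 := by ring
  have hminus : 1 - (1 - s) / 2 = (1 + s) / 2 := by ring
  simp only [binDiv, perspective, hplus, hminus, smul_eq_mul, inv_mul_eq_div,
    div_div_div_cancel_right₀ (two_ne_zero' ℝ)]

theorem binDiv_strictMono_general {f : ℝ → ℝ} (hf : StrictConvexOn ℝ (Ioi 0) f) :
    StrictMonoOn (binDiv f) (Ico 0 1) := by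
  rintro s ⟨hs, -⟩ t ⟨-, ht⟩ hst
  have hlr : (1 - t) / 2 < (1 + t) / 2 := by linarith
  have hx : (1 + s) / 2 ∈ openSegment ℝ ((1 - t) / 2) ((1 + t) / 2) := by
    rw [openSegment_eq_Ioo hlr]
    constructor <;> linarith
  rw [binDiv_eq_perspective_add_perspective f s, binDiv_eq_perspective_add_perspective f t,
    add_comm (perspective f (1 - (1 + t) / 2) _)]
  exact map_add_map_lt_of_mem_openSegment (strictConvexOn_perspective_one_sub hf)
    ⟨by linarith, by linarith⟩ ⟨by linarith, by linarith⟩ hlr.ne hx (by ring)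

theorem binDiv_strictMono (f : ℝ → ℝ)
    (hf : ContDiffOn ℝ 2 f (Set.Ioi 0))
    (hf'' : ∀ x : ℝ, 0 < x → 0 < deriv (deriv f) x)
    (hf1 : f 1 = 0) :
    ∀ s t : ℝ, 0 ≤ s → s < t → t < 1 → binDiv f s < binDiv f t := fun _ _ hs hst ht ↦
  have hconv : StrictConvexOn ℝ (Ioi 0) f :=
    strictConvexOn_of_deriv2_pos' (convex_Ioi 0) hf.continuousOn hf''
  binDiv_strictMono_general hconv ⟨hs, hst.trans ht⟩ ⟨hs.trans hst.le, ht⟩ hst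
end

section
/- Let f : ℝ → ℝ be twice continuously differentiable on (0,∞) with f''(x) > 0 for all x > 0 and f(1) = 0. Let (Ω, μ) be a measure space and p, q : Ω → ℝ measurable with p(ω) > 0 and q(ω) > 0 for all ω, ∫ p dμ = 1 and ∫ q dμ = 1. Assume the integrand (1/2)·(q·f(p/q) + p·f(q/p)) is μ-integrable, set D̃_f = (1/2)∫ (q·f(p/q) + p·f(q/p)) dμ and t = (1/2)∫ |p - q| dμ, and assume t < 1. Then D̃_f ≥ d_f(t), where d_f(s) = ((1-s)/2)·f((1+s)/(1-s)) + ((1+s)/2)·f((1-s)/(1+s)). -/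
open MeasureTheory

/-! Put `F x = f x + x * f x⁻¹`, which is convex along with `f`. The integrand of the symmetric
divergence is `q * F (p / q)`, and it is symmetric in `p` and `q`, so these may be replaced by
`max p q` and `min p q`, whose integrals are `1 + t` and `1 - t`. Jensen's inequality for the
perspective `(u, v) ↦ v * F (u / v)` then bounds the integral below by
`(1 - t) * F ((1 + t) / (1 - t))`, which is `2 * binDiv f t`. -/

section Convexity

variable {f : ℝ → ℝ} {S : Set ℝ} {x y : ℝ}

lemma add_rightDeriv_mul_sub_le_of_convexOn (hf : ConvexOn ℝ S f) (hx : x ∈ interior S)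
    (hy : y ∈ S) : f x + derivWithin f (Set.Ioi x) x * (y - x) ≤ f y := by
  rcases lt_trichotomy x y with hxy | rfl | hyx
  · have hslope := hf.rightDeriv_le_slope_of_mem_interior hx hy hxy
    rw [slope_def_field, le_div_iff₀ (sub_pos.2 hxy)] at hslope
    linarith
  · simp
  · have hslope := (hf.slope_le_leftDeriv_of_mem_interior hy hx hyx).trans
      (hf.leftDeriv_le_rightDeriv_of_mem_interior hx)
    rw [slope_def_field, div_le_iff₀ (sub_pos.2 hyx)] at hslope
    linarith

lemma convexOn_mul_comp_inv (hf : ConvexOn ℝ (Set.Ioi 0) f) :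
    ConvexOn ℝ (Set.Ioi 0) fun x => x * f x⁻¹ := by
  refine ⟨convex_Ioi 0, fun x (hx : 0 < x) y (hy : 0 < y) a b ha hb hab => ?_⟩
  have hz : 0 < a * x + b * y := convex_Ioi (0 : ℝ) hx hy ha hb hab
  simp only [smul_eq_mul]
  set z := a * x + b * y
  have hweights : a * x / z + b * y / z = 1 := by rw [← add_div, div_self hz.ne']
  have hz_inv : a * x / z * x⁻¹ + b * y / z * y⁻¹ = z⁻¹ := by
    field_simp
    exact hab
  have hconv : f z⁻¹ ≤ a * x / z * f x⁻¹ + b * y / z * f y⁻¹ := by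
    simpa only [smul_eq_mul, hz_inv] using
      hf.2 (inv_pos.2 hx) (inv_pos.2 hy) (by positivity) (by positivity) hweights
  calc z * f z⁻¹ ≤ z * (a * x / z * f x⁻¹ + b * y / z * f y⁻¹) :=
        mul_le_mul_of_nonneg_left hconv hz.le
    _ = a * (x * f x⁻¹) + b * (y * f y⁻¹) := by field_simp

end Convexity

section Symmetrization

variable {f : ℝ → ℝ} {u v : ℝ}

/-- The generator `F x = f x + x * f x⁻¹` of the symmetrized `f`-divergence: the `F`-divergence of
`p` from `q` is the sum of the `f`-divergences of `p` from `q` and of `q` from `p`. -/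
noncomputable def symmetrization (f : ℝ → ℝ) (x : ℝ) : ℝ :=
  f x + x * f x⁻¹

lemma convexOn_symmetrization (hf : ConvexOn ℝ (Set.Ioi 0) f) :
    ConvexOn ℝ (Set.Ioi 0) (symmetrization f) :=
  hf.add (convexOn_mul_comp_inv hf)

lemma mul_symmetrization_div (hv : v ≠ 0) :
    v * symmetrization f (u / v) = v * f (u / v) + u * f (v / u) := by
  rw [symmetrization, inv_div, mul_add, ← mul_assoc, mul_div_cancel₀ u hv]

lemma min_mul_symmetrization_max_div_min (hu : u ≠ 0) (hv : v ≠ 0) :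
    min u v * symmetrization f (max u v / min u v) = v * f (u / v) + u * f (v / u) := by
  rcases le_total u v with huv | hvu
  · rw [min_eq_left huv, max_eq_right huv, mul_symmetrization_div hu, add_comm]
  · rw [min_eq_right hvu, max_eq_left hvu, mul_symmetrization_div hv]

lemma binDiv_eq_mul_symmetrization {s : ℝ} (hs : 1 - s ≠ 0) :
    binDiv f s = 1 / 2 * ((1 - s) * symmetrization f ((1 + s) / (1 - s))) := by
  rw [mul_symmetrization_div hs, binDiv]
  ring

end Symmetrization

section Integral

variable {Ω : Type*} [MeasurableSpace Ω] {μ : Measure Ω} {u v : Ω → ℝ}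

lemma integral_pos_of_ae_pos [NeZero μ] (hu : Integrable u μ) (hpos : ∀ᵐ ω ∂μ, 0 < u ω) :
    0 < ∫ ω, u ω ∂μ := by
  rw [integral_pos_iff_support_of_nonneg_ae (hpos.mono fun _ h => h.le) hu]
  have hsupp : Function.support u =ᵐ[μ] Set.univ :=
    Filter.eventuallyEq_univ.2 (hpos.mono fun _ h => h.ne')
  rw [measure_congr hsupp]
  exact Measure.measure_univ_pos.2 (NeZero.ne μ)

lemma integral_max_eq (hu : Integrable u μ) (hv : Integrable v μ) :
    ∫ ω, max (u ω) (v ω) ∂μ =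
      2⁻¹ * (∫ ω, u ω ∂μ + ∫ ω, v ω ∂μ + ∫ ω, |u ω - v ω| ∂μ) := by
  have hadd : Integrable (fun ω => u ω + v ω) μ := hu.add hv
  have habs : Integrable (fun ω => |u ω - v ω|) μ := (hu.sub hv).abs
  simp only [sup_eq_half_smul_add_add_abs_sub' ℝ, smul_eq_mul, abs_sub_comm (v _)]
  rw [integral_const_mul, integral_add hadd habs, integral_add hu hv]

lemma integral_min_eq (hu : Integrable u μ) (hv : Integrable v μ) :
    ∫ ω, min (u ω) (v ω) ∂μ =
      2⁻¹ * (∫ ω, u ω ∂μ + ∫ ω, v ω ∂μ - ∫ ω, |u ω - v ω| ∂μ) := by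
  have hadd : Integrable (fun ω => u ω + v ω) μ := hu.add hv
  have habs : Integrable (fun ω => |u ω - v ω|) μ := (hu.sub hv).abs
  simp only [inf_eq_half_smul_add_sub_abs_sub' ℝ, smul_eq_mul, abs_sub_comm (v _)]
  rw [integral_const_mul, integral_sub hadd habs, integral_add hu hv]

lemma integral_mul_apply_div_integral_le {F : ℝ → ℝ} {S : Set ℝ} (hF : ConvexOn ℝ S F)
    (hu : Integrable u μ) (hv : Integrable v μ) (hv_pos : ∀ᵐ ω ∂μ, 0 < v ω)
    (hmem : ∀ᵐ ω ∂μ, u ω / v ω ∈ S)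
    (hmean : (∫ ω, u ω ∂μ) / ∫ ω, v ω ∂μ ∈ interior S)
    (hint : Integrable (fun ω => v ω * F (u ω / v ω)) μ) :
    (∫ ω, v ω ∂μ) * F ((∫ ω, u ω ∂μ) / ∫ ω, v ω ∂μ) ≤ ∫ ω, v ω * F (u ω / v ω) ∂μ := by
  rcases eq_zero_or_neZero μ with rfl | _
  · simp
  set m := (∫ ω, u ω ∂μ) / ∫ ω, v ω ∂μ
  set c := derivWithin F (Set.Ioi m) m
  have hmul : m * ∫ ω, v ω ∂μ = ∫ ω, u ω ∂μ :=
    div_mul_cancel₀ _ (integral_pos_of_ae_pos hv hv_pos).ne'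
  have htangent : ∀ᵐ ω ∂μ, F m * v ω + c * (u ω - m * v ω) ≤ v ω * F (u ω / v ω) := by
    filter_upwards [hv_pos, hmem] with ω hω hωS
    calc F m * v ω + c * (u ω - m * v ω) = v ω * (F m + c * (u ω / v ω - m)) := by field_simp
      _ ≤ v ω * F (u ω / v ω) :=
        mul_le_mul_of_nonneg_left (add_rightDeriv_mul_sub_le_of_convexOn hF hmean hωS) hω.le
  have hdiff : Integrable (fun ω => u ω - m * v ω) μ := hu.sub (hv.const_mul m)
  calc (∫ ω, v ω ∂μ) * F m = ∫ ω, (F m * v ω + c * (u ω - m * v ω)) ∂μ := by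
        rw [integral_add (hv.const_mul _) (hdiff.const_mul _), integral_const_mul,
          integral_const_mul, integral_sub hu (hv.const_mul m), integral_const_mul, hmul]
        ring
    _ ≤ ∫ ω, v ω * F (u ω / v ω) ∂μ :=
        integral_mono_ae ((hv.const_mul _).add (hdiff.const_mul _)) hint htangent

end Integral

theorem sym_fdiv_ge_binDiv_tv_general {Ω : Type*} [MeasurableSpace Ω] {μ : Measure Ω}
    {f : ℝ → ℝ} (hf : ConvexOn ℝ (Set.Ioi 0) f) {p q : Ω → ℝ}
    (hppos : ∀ᵐ ω ∂μ, 0 < p ω) (hqpos : ∀ᵐ ω ∂μ, 0 < q ω)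
    (hpint : ∫ ω, p ω ∂μ = 1) (hqint : ∫ ω, q ω ∂μ = 1)
    (hint : Integrable (fun ω => q ω * f (p ω / q ω) + p ω * f (q ω / p ω)) μ) :
    binDiv f ((1 / 2) * ∫ ω, |p ω - q ω| ∂μ) ≤
      (1 / 2) * ∫ ω, (q ω * f (p ω / q ω) + p ω * f (q ω / p ω)) ∂μ := by
  set t := (1 / 2) * ∫ ω, |p ω - q ω| ∂μ with ht
  have hp : Integrable p μ := integrable_of_integral_eq_one hpint
  have hq : Integrable q μ := integrable_of_integral_eq_one hqint
  have : NeZero μ := ⟨by rintro rfl; simp at hpint⟩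
  have hmax : ∫ ω, max (p ω) (q ω) ∂μ = 1 + t := by
    rw [integral_max_eq hp hq, hpint, hqint, ht]; ring
  have hmin : ∫ ω, min (p ω) (q ω) ∂μ = 1 - t := by
    rw [integral_min_eq hp hq, hpint, hqint, ht]; ring
  have hmin_pos : ∀ᵐ ω ∂μ, 0 < min (p ω) (q ω) := by
    filter_upwards [hppos, hqpos] with ω using lt_min
  have hmax_pos : ∀ᵐ ω ∂μ, 0 < max (p ω) (q ω) := hppos.mono fun _ => lt_max_of_lt_left
  have ht_lt : 0 < 1 - t := hmin ▸ integral_pos_of_ae_pos (hp.inf hq) hmin_pos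
  have ht_gt : 0 < 1 + t := hmax ▸ integral_pos_of_ae_pos (hp.sup hq) hmax_pos
  have hsymm : (fun ω => min (p ω) (q ω) * symmetrization f (max (p ω) (q ω) / min (p ω) (q ω)))
      =ᵐ[μ] fun ω => q ω * f (p ω / q ω) + p ω * f (q ω / p ω) := by
    filter_upwards [hppos, hqpos] with ω hpω hqω using
      min_mul_symmetrization_max_div_min hpω.ne' hqω.ne'
  have hjensen := integral_mul_apply_div_integral_le (convexOn_symmetrization hf) (hp.sup hq)
    (hp.inf hq) hmin_pos (by filter_upwards [hmax_pos, hmin_pos] with ω using div_pos)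
    (by simpa [hmax, hmin] using div_pos ht_gt ht_lt) (hint.congr hsymm.symm)
  simp only [Pi.sup_apply, Pi.inf_apply, hmax, hmin, integral_congr_ae hsymm] at hjensen
  rw [binDiv_eq_mul_symmetrization ht_lt.ne']
  gcongr

theorem sym_fdiv_ge_binDiv_tv {Ω : Type*} [MeasurableSpace Ω] (μ : Measure Ω)
    (f : ℝ → ℝ)
    (hf : ContDiffOn ℝ 2 f (Set.Ioi 0))
    (hf'' : ∀ x : ℝ, 0 < x → 0 < deriv (deriv f) x)
    (hf1 : f 1 = 0)
    (p q : Ω → ℝ) (hp : Measurable p) (hq : Measurable q)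
    (hppos : ∀ ω, 0 < p ω) (hqpos : ∀ ω, 0 < q ω)
    (hpint : ∫ ω, p ω ∂μ = 1) (hqint : ∫ ω, q ω ∂μ = 1)
    (hint : Integrable
      (fun ω => (1 / 2) * (q ω * f (p ω / q ω) + p ω * f (q ω / p ω))) μ)
    (ht : (1 / 2) * ∫ ω, |p ω - q ω| ∂μ < 1) :
    binDiv f ((1 / 2) * ∫ ω, |p ω - q ω| ∂μ) ≤
      (1 / 2) * ∫ ω, (q ω * f (p ω / q ω) + p ω * f (q ω / p ω)) ∂μ := by
  have hconv : StrictConvexOn ℝ (Set.Ioi 0) f :=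
    strictConvexOn_of_deriv2_pos' (convex_Ioi 0) hf.continuousOn hf''
  exact sym_fdiv_ge_binDiv_tv_general hconv.convexOn (ae_of_all μ hppos) (ae_of_all μ hqpos)
    hpint hqint ((integrable_const_mul_iff (by norm_num) _).1 hint)
end

section
/- Let f : ℝ → ℝ be twice continuously differentiable on (0,∞) with f''(x) > 0 for all x > 0 and f(1) = 0, with d_f(s) = ((1-s)/2)·f((1+s)/(1-s)) + ((1+s)/2)·f((1-s)/(1+s)). Let (Ω, μ) be a measure space, p, q : Ω → ℝ measurable with p, q > 0 everywhere and ∫ p dμ = ∫ q dμ = 1, assume the symmetric f-divergence integrand is μ-integrable with D̃_f = (1/2)∫ (q·f(p/q) + p·f(q/p)) dμ, and assume (1/2)∫|p−q| dμ < 1. Let X : Ω → ℝ be measurable with |X| ≤ M for some M > 0, with X·p and X·q μ-integrable. Then d_f( |∫ X·p dμ − ∫ X·q dμ| / (2M) ) ≤ D̃_f. -/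
open MeasureTheory

/-! Symmetrizing turns the divergence into a mean of binary divergences: the integrand of
`D̃_f(p, q)` is the probability density `(p + q) / 2` times `binDiv f t`, where
`t = |p - q| / (p + q)`. As `binDiv f` is built from perspectives of the convex function `f`, it is
convex on `(-1, 1)`, and Jensen's inequality gives `binDiv f TV ≤ D̃_f`, because the mean of `t` is
the total variation distance `TV`. Being convex and even, `binDiv f` is increasing on `[0, 1)`, and
the means of a function bounded by `M` under `p` and `q` differ by at most `2 * M * TV`. -/

open Set

section Convexity

theorem convexOn_perspective {𝕜 E β : Type*} [Field 𝕜] [LinearOrder 𝕜] [IsStrictOrderedRing 𝕜]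
    [AddCommGroup E] [Module 𝕜 E] [AddCommMonoid β] [PartialOrder β] [Module 𝕜 β]
    [PosSMulMono 𝕜 β] {S : Set E} {f : E → β} (hf : ConvexOn 𝕜 S f) :
    ConvexOn 𝕜 {z : E × 𝕜 | 0 < z.2 ∧ z.2⁻¹ • z.1 ∈ S} fun z ↦ z.2 • f (z.2⁻¹ • z.1) := by
  suffices combo : ∀ (x y : E) (s t a b : 𝕜), 0 < s → s⁻¹ • x ∈ S → 0 < t → t⁻¹ • y ∈ S →
      0 ≤ a → 0 ≤ b → a + b = 1 →
      (0 < a * s + b * t ∧ (a * s + b * t)⁻¹ • (a • x + b • y) ∈ S) ∧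
        (a * s + b * t) • f ((a * s + b * t)⁻¹ • (a • x + b • y)) ≤
          a • s • f (s⁻¹ • x) + b • t • f (t⁻¹ • y) from
    ⟨fun z hz w hw a b ha hb hab ↦ (combo z.1 w.1 z.2 w.2 a b hz.1 hz.2 hw.1 hw.2 ha hb hab).1,
      fun z hz w hw a b ha hb hab ↦ (combo z.1 w.1 z.2 w.2 a b hz.1 hz.2 hw.1 hw.2 ha hb hab).2⟩
  intro x y s t a b hs hx ht hy ha hb hab
  set r := a * s + b * t with hr_def
  have hr : 0 < r := convex_Ioi 0 hs ht ha hb hab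
  have hα : 0 ≤ a * s / r := by positivity
  have hβ : 0 ≤ b * t / r := by positivity
  have hαβ : a * s / r + b * t / r = 1 := by rw [← add_div, ← hr_def, div_self hr.ne']
  have hpoint : r⁻¹ • (a • x + b • y) = (a * s / r) • s⁻¹ • x + (b * t / r) • t⁻¹ • y := by
    simp only [smul_add, smul_smul]
    congr 2 <;> field_simp
  rw [hpoint]
  refine ⟨⟨hr, hf.1 hx hy hα hβ hαβ⟩, ?_⟩
  calc r • f ((a * s / r) • s⁻¹ • x + (b * t / r) • t⁻¹ • y)
      ≤ r • ((a * s / r) • f (s⁻¹ • x) + (b * t / r) • f (t⁻¹ • y)) :=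
        smul_le_smul_of_nonneg_left (hf.2 hx hy hα hβ hαβ) hr.le
    _ = a • s • f (s⁻¹ • x) + b • t • f (t⁻¹ • y) := by
        simp only [smul_add, smul_smul, mul_div_cancel₀ _ hr.ne']

theorem exists_subgradient_of_convexOn {S : Set ℝ} {φ : ℝ → ℝ} {x : ℝ} (hφ : ConvexOn ℝ S φ)
    (hx : x ∈ interior S) : ∃ c, ∀ y ∈ S, φ x + c * (y - x) ≤ φ y := by
  refine ⟨derivWithin φ (Ioi x) x, fun y hy ↦ ?_⟩
  rcases lt_trichotomy x y with hxy | rfl | hyx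
  · have hslope := hφ.rightDeriv_le_slope_of_mem_interior hx hy hxy
    rw [slope_def_field, le_div_iff₀ (sub_pos.2 hxy)] at hslope
    linarith
  · simp
  · have hslope := (hφ.slope_le_leftDeriv_of_mem_interior hy hx hyx).trans
      (hφ.leftDeriv_le_rightDeriv_of_mem_interior hx)
    rw [slope_def_field, div_le_iff₀ (sub_pos.2 hyx)] at hslope
    linarith

/-- `ConvexOn.map_integral_le` is stated for closed sets and does not reach the open interval on
which `binDiv f` is convex. -/
theorem map_integral_mul_le_of_convexOn {Ω : Type*} [MeasurableSpace Ω] {μ : Measure Ω} {S : Set ℝ}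
    {φ : ℝ → ℝ} {w g : Ω → ℝ} (hφ : ConvexOn ℝ S φ) (hw : 0 ≤ᵐ[μ] w) (hw1 : ∫ ω, w ω ∂μ = 1)
    (hgS : ∀ᵐ ω ∂μ, g ω ∈ S) (hwg : Integrable (fun ω ↦ w ω * g ω) μ)
    (hwφ : Integrable (fun ω ↦ w ω * φ (g ω)) μ) (hmean : ∫ ω, w ω * g ω ∂μ ∈ interior S) :
    φ (∫ ω, w ω * g ω ∂μ) ≤ ∫ ω, w ω * φ (g ω) ∂μ := by
  have hwint : Integrable w μ := .of_integral_ne_zero (by simp [hw1])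
  set m := ∫ ω, w ω * g ω ∂μ with hm
  obtain ⟨c, hc⟩ := exists_subgradient_of_convexOn hφ hmean
  calc φ m = ∫ ω, ((φ m - c * m) * w ω + c * (w ω * g ω)) ∂μ := by
        rw [integral_add (hwint.const_mul _) (hwg.const_mul _), integral_const_mul,
          integral_const_mul, hw1, ← hm]
        ring
    _ ≤ ∫ ω, w ω * φ (g ω) ∂μ := by
        refine integral_mono_ae ((hwint.const_mul _).add (hwg.const_mul _)) hwφ ?_
        filter_upwards [hw, hgS] with ω hwω hgω
        linarith [mul_le_mul_of_nonneg_left (hc _ hgω) hwω]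

end Convexity

theorem integral_lt_integral_of_ae_lt {Ω : Type*} [MeasurableSpace Ω] {μ : Measure Ω} [NeZero μ]
    {g h : Ω → ℝ} (hg : Integrable g μ) (hh : Integrable h μ) (hlt : ∀ᵐ ω ∂μ, g ω < h ω) :
    ∫ ω, g ω ∂μ < ∫ ω, h ω ∂μ := by
  have hle : g ≤ᵐ[μ] h := hlt.mono fun _ ↦ le_of_lt
  refine (integral_mono_ae hg hh hle).lt_of_ne fun heq ↦ ?_
  obtain ⟨ω, hω, hω'⟩ := (hlt.and ((integral_eq_iff_of_ae_le hg hh hle).1 heq)).exists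
  exact hω.ne hω'

section BinDiv

variable {f : ℝ → ℝ}

theorem binDiv_neg (f : ℝ → ℝ) (s : ℝ) : binDiv f (-s) = binDiv f s := by
  simp only [binDiv, sub_neg_eq_add, ← sub_eq_add_neg]
  ring

theorem convexOn_binDiv (hf : ConvexOn ℝ (Ioi 0) f) : ConvexOn ℝ (Ioo (-1) 1) (binDiv f) := by
  have line (s : ℝ) : AffineMap.lineMap ((1, 1) : ℝ × ℝ) (2, 0) s = (1 + s, 1 - s) := by
    ext <;> simp only [AffineMap.fst_lineMap, AffineMap.snd_lineMap, AffineMap.lineMap_apply_ring']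
      <;> ring
  have half : ConvexOn ℝ (Ioo (-1) 1) fun s : ℝ ↦ (1 - s) * f ((1 + s) / (1 - s)) := by
    refine (((convexOn_perspective hf).comp_affineMap (AffineMap.lineMap (1, 1) (2, 0))).subset
      (fun s hs ↦ ?_) (convex_Ioo (-1 : ℝ) 1)).congr fun s _ ↦ ?_
    · have h1 : 0 < 1 + s := neg_lt_iff_pos_add'.1 hs.1
      have h2 : 0 < 1 - s := sub_pos.2 hs.2
      rw [mem_preimage, line]
      exact ⟨h2, mul_pos (inv_pos.2 h2) h1⟩
    · simp only [Function.comp_apply, line, smul_eq_mul, inv_mul_eq_div]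
  have half_neg : ConvexOn ℝ (Ioo (-1) 1) fun s : ℝ ↦ (1 + s) * f ((1 - s) / (1 + s)) := by
    refine ((half.comp_linearMap (-LinearMap.id)).subset (fun s hs ↦ ?_) (convex_Ioo (-1) 1)).congr
      fun s _ ↦ ?_
    · exact ⟨neg_lt_neg hs.2, neg_lt.1 hs.1⟩
    · simp only [Function.comp_apply, LinearMap.neg_apply, LinearMap.id_apply, sub_neg_eq_add,
        ← sub_eq_add_neg]
  refine ((half.add half_neg).smul (one_half_pos (α := ℝ)).le).congr fun s _ ↦ ?_
  simp only [binDiv, Pi.add_apply, smul_eq_mul]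
  ring

theorem monotoneOn_binDiv (hf : ConvexOn ℝ (Ioi 0) f) : MonotoneOn (binDiv f) (Ico 0 1) := by
  rintro s ⟨hs, -⟩ t ⟨ht, ht1⟩ hst
  simpa only [binDiv_neg, max_self] using
    (convexOn_binDiv hf).le_max_of_mem_Icc (x := -t) (y := t) (z := s)
      ⟨by linarith, by linarith⟩ ⟨by linarith, ht1⟩ ⟨by linarith, hst⟩

theorem add_div_two_mul_binDiv (f : ℝ → ℝ) {a b : ℝ} (ha : 0 < a) (hb : 0 < b) :
    (a + b) / 2 * binDiv f (|a - b| / (a + b)) = 1 / 2 * (b * f (a / b) + a * f (b / a)) := by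
  wlog hba : b ≤ a generalizing a b
  · rw [abs_sub_comm, add_comm a b, this hb ha (le_of_not_ge hba), add_comm]
  have hsub : 1 - (a - b) / (a + b) = 2 * b / (a + b) := by field_simp; ring
  have hadd : 1 + (a - b) / (a + b) = 2 * a / (a + b) := by field_simp; ring
  have hab : 2 * a / (a + b) / (2 * b / (a + b)) = a / b := by field_simp
  have hba' : 2 * b / (a + b) / (2 * a / (a + b)) = b / a := by field_simp
  rw [abs_of_nonneg (sub_nonneg.2 hba), binDiv, hsub, hadd, hab, hba']
  field_simp

end BinDiv

section Divergence

variable {Ω : Type*} [MeasurableSpace Ω]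

/-- The symmetric f-divergence `D̃_f(p, q)` of two densities with respect to `μ`, as a Bochner
integral: it takes the junk value `0` when the integrand is not integrable. -/
noncomputable def symFDiv (μ : Measure Ω) (f : ℝ → ℝ) (p q : Ω → ℝ) : ℝ :=
  (1 / 2) * ∫ ω, (q ω * f (p ω / q ω) + p ω * f (q ω / p ω)) ∂μ

/-- The total variation distance of two densities with respect to `μ`. -/
noncomputable def tvDist (μ : Measure Ω) (p q : Ω → ℝ) : ℝ :=
  (1 / 2) * ∫ ω, |p ω - q ω| ∂μ

variable {μ : Measure Ω} {f : ℝ → ℝ} {p q : Ω → ℝ}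

theorem tvDist_nonneg (μ : Measure Ω) (p q : Ω → ℝ) : 0 ≤ tvDist μ p q := by
  unfold tvDist
  positivity

theorem tvDist_lt_one (hp : ∀ᵐ ω ∂μ, 0 < p ω) (hq : ∀ᵐ ω ∂μ, 0 < q ω) (hp1 : ∫ ω, p ω ∂μ = 1)
    (hq1 : ∫ ω, q ω ∂μ = 1) : tvDist μ p q < 1 := by
  have hpi : Integrable p μ := .of_integral_ne_zero (by simp [hp1])
  have hqi : Integrable q μ := .of_integral_ne_zero (by simp [hq1])
  have : NeZero μ := ⟨by rintro rfl; simp at hp1⟩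
  have hlt : ∫ ω, |p ω - q ω| ∂μ < ∫ ω, (p ω + q ω) ∂μ := by
    refine integral_lt_integral_of_ae_lt (hpi.sub hqi).abs (hpi.add hqi) ?_
    filter_upwards [hp, hq] with ω hpω hqω
    exact abs_lt.2 ⟨by linarith, by linarith⟩
  rw [integral_add hpi hqi, hp1, hq1] at hlt
  unfold tvDist
  linarith

theorem binDiv_tvDist_le_symFDiv (hf : ConvexOn ℝ (Ioi 0) f) (hp : ∀ᵐ ω ∂μ, 0 < p ω)
    (hq : ∀ᵐ ω ∂μ, 0 < q ω) (hp1 : ∫ ω, p ω ∂μ = 1) (hq1 : ∫ ω, q ω ∂μ = 1)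
    (hint : Integrable (fun ω ↦ (1 / 2) * (q ω * f (p ω / q ω) + p ω * f (q ω / p ω))) μ) :
    binDiv f (tvDist μ p q) ≤ symFDiv μ f p q := by
  have hpi : Integrable p μ := .of_integral_ne_zero (by simp [hp1])
  have hqi : Integrable q μ := .of_integral_ne_zero (by simp [hq1])
  let w ω := (p ω + q ω) / 2
  let t ω := |p ω - q ω| / (p ω + q ω)
  have hw1 : ∫ ω, w ω ∂μ = 1 := by
    rw [integral_div, integral_add hpi hqi, hp1, hq1]
    norm_num
  have hwt : (fun ω ↦ 1 / 2 * |p ω - q ω|) =ᵐ[μ] fun ω ↦ w ω * t ω := by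
    filter_upwards [hp, hq] with ω hpω hqω
    simp only [w, t]
    field_simp
  have hwφ : (fun ω ↦ 1 / 2 * (q ω * f (p ω / q ω) + p ω * f (q ω / p ω))) =ᵐ[μ]
      fun ω ↦ w ω * binDiv f (t ω) := by
    filter_upwards [hp, hq] with ω hpω hqω
    exact (add_div_two_mul_binDiv f hpω hqω).symm
  have htv : tvDist μ p q = ∫ ω, w ω * t ω ∂μ := by
    rw [tvDist, ← integral_const_mul, integral_congr_ae hwt]
  have hdiv : symFDiv μ f p q = ∫ ω, w ω * binDiv f (t ω) ∂μ := by
    rw [symFDiv, ← integral_const_mul, integral_congr_ae hwφ]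
  rw [hdiv, htv]
  refine map_integral_mul_le_of_convexOn (convexOn_binDiv hf) ?_ hw1 ?_
    (((hpi.sub hqi).abs.const_mul _).congr hwt) (hint.congr hwφ) ?_
  · filter_upwards [hp, hq] with ω hpω hqω
    exact (half_pos (add_pos hpω hqω)).le
  · filter_upwards [hp, hq] with ω hpω hqω
    have hsum : 0 < p ω + q ω := add_pos hpω hqω
    refine ⟨by linarith [div_nonneg (abs_nonneg (p ω - q ω)) hsum.le], (div_lt_one hsum).2 ?_⟩
    exact abs_lt.2 ⟨by linarith, by linarith⟩
  · rw [← htv, interior_Ioo]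
    exact ⟨by linarith [tvDist_nonneg μ p q], tvDist_lt_one hp hq hp1 hq1⟩

theorem abs_integral_mul_sub_le_tvDist {X : Ω → ℝ} {M : ℝ} (hpq : Integrable (fun ω ↦ p ω - q ω) μ)
    (hXM : ∀ᵐ ω ∂μ, |X ω| ≤ M) (hXp : Integrable (fun ω ↦ X ω * p ω) μ)
    (hXq : Integrable (fun ω ↦ X ω * q ω) μ) :
    |(∫ ω, X ω * p ω ∂μ) - ∫ ω, X ω * q ω ∂μ| ≤ 2 * M * tvDist μ p q := by
  calc |(∫ ω, X ω * p ω ∂μ) - ∫ ω, X ω * q ω ∂μ|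
      = ‖∫ ω, (X ω * p ω - X ω * q ω) ∂μ‖ := by rw [← integral_sub hXp hXq, Real.norm_eq_abs]
    _ ≤ ∫ ω, M * |p ω - q ω| ∂μ := by
        refine norm_integral_le_of_norm_le (hpq.abs.const_mul M) ?_
        filter_upwards [hXM] with ω hω
        rw [Real.norm_eq_abs, ← mul_sub, abs_mul]
        exact mul_le_mul_of_nonneg_right hω (abs_nonneg _)
    _ = 2 * M * tvDist μ p q := by
        rw [integral_const_mul, tvDist]
        ring

end Divergence

theorem binDiv_expectation_diff_le_sym_fdiv'_general {Ω : Type*} [MeasurableSpace Ω]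
    {μ : Measure Ω} {f : ℝ → ℝ} (hf : ConvexOn ℝ (Ioi 0) f) {p q X : Ω → ℝ} {M : ℝ}
    (hp : ∀ᵐ ω ∂μ, 0 < p ω) (hq : ∀ᵐ ω ∂μ, 0 < q ω)
    (hp1 : ∫ ω, p ω ∂μ = 1) (hq1 : ∫ ω, q ω ∂μ = 1)
    (hint : Integrable (fun ω ↦ (1 / 2) * (q ω * f (p ω / q ω) + p ω * f (q ω / p ω))) μ)
    (hM : 0 < M) (hXM : ∀ᵐ ω ∂μ, |X ω| ≤ M)
    (hXp : Integrable (fun ω ↦ X ω * p ω) μ) (hXq : Integrable (fun ω ↦ X ω * q ω) μ) :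
    binDiv f (|(∫ ω, X ω * p ω ∂μ) - ∫ ω, X ω * q ω ∂μ| / (2 * M)) ≤ symFDiv μ f p q := by
  have hpi : Integrable p μ := .of_integral_ne_zero (by simp [hp1])
  have hqi : Integrable q μ := .of_integral_ne_zero (by simp [hq1])
  have hle : |(∫ ω, X ω * p ω ∂μ) - ∫ ω, X ω * q ω ∂μ| / (2 * M) ≤ tvDist μ p q :=
    (div_le_iff₀' (by positivity)).2 (abs_integral_mul_sub_le_tvDist (hpi.sub hqi) hXM hXp hXq)
  have hlt : tvDist μ p q < 1 := tvDist_lt_one hp hq hp1 hq1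
  calc binDiv f (|(∫ ω, X ω * p ω ∂μ) - ∫ ω, X ω * q ω ∂μ| / (2 * M))
      ≤ binDiv f (tvDist μ p q) :=
        monotoneOn_binDiv hf ⟨by positivity, hle.trans_lt hlt⟩ ⟨tvDist_nonneg μ p q, hlt⟩ hle
    _ ≤ symFDiv μ f p q := binDiv_tvDist_le_symFDiv hf hp hq hp1 hq1 hint

theorem binDiv_expectation_diff_le_sym_fdiv' {Ω : Type*} [MeasurableSpace Ω]
    (μ : Measure Ω) (f : ℝ → ℝ)
    (hf : ContDiffOn ℝ 2 f (Set.Ioi 0))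
    (hf'' : ∀ x : ℝ, 0 < x → 0 < deriv (deriv f) x)
    (hf1 : f 1 = 0)
    (p q : Ω → ℝ) (hp : Measurable p) (hq : Measurable q)
    (hppos : ∀ ω, 0 < p ω) (hqpos : ∀ ω, 0 < q ω)
    (hpint : ∫ ω, p ω ∂μ = 1) (hqint : ∫ ω, q ω ∂μ = 1)
    (hint : Integrable
      (fun ω => (1 / 2) * (q ω * f (p ω / q ω) + p ω * f (q ω / p ω))) μ)
    (htv : (1 / 2) * ∫ ω, |p ω - q ω| ∂μ < 1)
    (X : Ω → ℝ) (hX : Measurable X)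
    (M : ℝ) (hM : 0 < M) (hXM : ∀ ω, |X ω| ≤ M)
    (hXp : Integrable (fun ω => X ω * p ω) μ)
    (hXq : Integrable (fun ω => X ω * q ω) μ) :
    binDiv f (|(∫ ω, X ω * p ω ∂μ) - ∫ ω, X ω * q ω ∂μ| / (2 * M)) ≤
      (1 / 2) * ∫ ω, (q ω * f (p ω / q ω) + p ω * f (q ω / p ω)) ∂μ :=
  binDiv_expectation_diff_le_sym_fdiv'_general
    (strictConvexOn_of_deriv2_pos' (convex_Ioi 0) hf.continuousOn hf'').convexOn
    (ae_of_all _ hppos) (ae_of_all _ hqpos) hpint hqint hint hM (ae_of_all _ hXM) hXp hXq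
end

section
/- Let (Ω, μ) be a measure space and p, q : Ω → ℝ measurable with p(ω) > 0, q(ω) > 0 for all ω and ∫ p dμ = ∫ q dμ = 1, and suppose the triangular discrimination Δ = (1/2)∫ (p−q)²/(p+q) dμ is finite (the integrand is μ-integrable). Let X : Ω → ℝ be measurable with |X(ω)| ≤ M for all ω and X·p, X·q μ-integrable. Then |∫ X·p dμ − ∫ X·q dμ| ≤ 2M·√Δ. -/
/-!
Boundedness of `X` reduces the claim to `∫ |p - q|`. Since
`|p - q|² = (p + q) · ((p - q)² / (p + q))`, the Cauchy–Schwarz inequality bounds `(∫ |p - q|)²` by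
the total mass of `p + q` times twice the triangular discrimination.
-/

open MeasureTheory

section

variable {𝕜 : Type*} [Field 𝕜] [LinearOrder 𝕜] [IsStrictOrderedRing 𝕜]

theorem quadratic_nonneg_of_sq_le_mul {a b c : 𝕜} (ha : 0 ≤ a) (hc : 0 ≤ c)
    (hb : b ^ 2 ≤ a * c) (t : 𝕜) : 0 ≤ a * (t * t) + 2 * b * t + c := by
  rcases ha.eq_or_lt with rfl | ha
  · have hb0 : b = 0 := by simpa [sq_nonpos_iff] using hb
    simpa [hb0] using hc
  · refine (mul_nonneg_iff_of_pos_left ha).1 ?_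
    calc 0 ≤ (a * t + b) ^ 2 + (a * c - b ^ 2) := add_nonneg (sq_nonneg _) (sub_nonneg.2 hb)
      _ = a * (a * (t * t) + 2 * b * t + c) := by ring

theorem add_mul_sq_sub_div_add {a b : 𝕜} (ha : 0 ≤ a) (hb : 0 ≤ b) :
    (a + b) * ((a - b) ^ 2 / (a + b)) = (a - b) ^ 2 := by
  refine mul_div_cancel_of_imp' fun hab ↦ ?_
  obtain ⟨rfl, rfl⟩ := (add_eq_zero_iff_of_nonneg ha hb).1 hab
  simp

theorem sq_sub_div_add_le_add {a b : 𝕜} (ha : 0 ≤ a) (hb : 0 ≤ b) :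
    (a - b) ^ 2 / (a + b) ≤ a + b :=
  div_le_of_le_mul₀ (by positivity) (by positivity) (by nlinarith [mul_nonneg ha hb])

end

section

variable {Ω : Type*} [MeasurableSpace Ω] {μ : Measure Ω}

theorem sq_integral_le_integral_mul_integral_of_sq_le_mul {f g h : Ω → ℝ}
    (hf : Integrable f μ) (hg : Integrable g μ) (hh : Integrable h μ)
    (hf0 : 0 ≤ᵐ[μ] f) (hg0 : 0 ≤ᵐ[μ] g) (hle : ∀ᵐ ω ∂μ, h ω ^ 2 ≤ f ω * g ω) :
    (∫ ω, h ω ∂μ) ^ 2 ≤ (∫ ω, f ω ∂μ) * ∫ ω, g ω ∂μ := by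
  have integral_quadratic (t : ℝ) : ∫ ω, f ω * (t * t) + 2 * h ω * t + g ω ∂μ =
      (∫ ω, f ω ∂μ) * (t * t) + (2 * ∫ ω, h ω ∂μ) * t + ∫ ω, g ω ∂μ := by
    have hft := hf.mul_const (t * t)
    have hht := (hh.const_mul 2).mul_const t
    have hsum : Integrable (fun ω ↦ f ω * (t * t) + 2 * h ω * t) μ := hft.add hht
    rw [integral_add hsum hg, integral_add hft hht, integral_mul_const,
      integral_mul_const, integral_const_mul]
  have discrim_nonpos := discrim_le_zero fun t ↦ by
    rw [← integral_quadratic t]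
    refine integral_nonneg_of_ae ?_
    filter_upwards [hf0, hg0, hle] with ω hfω hgω hω
      using quadratic_nonneg_of_sq_le_mul hfω hgω hω t
  rw [discrim] at discrim_nonpos
  linarith

/-- The triangular discrimination `(1/2) ∫ (p - q)² / (p + q) dμ` of two densities, the
discrepancy between `p` and `q` in terms of which differences of expectations are bounded. At a point
where both densities vanish the integrand is `0 / 0 = 0`, so such points do not contribute. -/
noncomputable def triangularDiscrimination (μ : Measure Ω) (p q : Ω → ℝ) : ℝ :=
  (1 / 2) * ∫ ω, (p ω - q ω) ^ 2 / (p ω + q ω) ∂μ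

variable {p q : Ω → ℝ}

theorem integrable_sq_sub_div_add (hp : Integrable p μ) (hq : Integrable q μ)
    (hp0 : 0 ≤ᵐ[μ] p) (hq0 : 0 ≤ᵐ[μ] q) :
    Integrable (fun ω ↦ (p ω - q ω) ^ 2 / (p ω + q ω)) μ := by
  refine (hp.add hq).mono'
    (((hp.sub hq).aemeasurable.pow_const 2).div (hp.add hq).aemeasurable).aestronglyMeasurable ?_
  filter_upwards [hp0, hq0] with ω hpω hqω
  have hnonneg : 0 ≤ (p ω - q ω) ^ 2 / (p ω + q ω) := div_nonneg (sq_nonneg _) (add_nonneg hpω hqω)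
  rw [Real.norm_of_nonneg hnonneg]
  exact sq_sub_div_add_le_add hpω hqω

theorem sq_integral_abs_sub_le_mul_triangularDiscrimination
    (hp : Integrable p μ) (hq : Integrable q μ) (hp0 : 0 ≤ᵐ[μ] p) (hq0 : 0 ≤ᵐ[μ] q) :
    (∫ ω, |p ω - q ω| ∂μ) ^ 2 ≤
      2 * ((∫ ω, p ω ∂μ) + ∫ ω, q ω ∂μ) * triangularDiscrimination μ p q := by
  have hadd0 : ∀ᵐ ω ∂μ, 0 ≤ p ω + q ω := by
    filter_upwards [hp0, hq0] with ω hpω hqω using add_nonneg hpω hqω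
  calc (∫ ω, |p ω - q ω| ∂μ) ^ 2
      ≤ (∫ ω, p ω + q ω ∂μ) * ∫ ω, (p ω - q ω) ^ 2 / (p ω + q ω) ∂μ := by
        refine sq_integral_le_integral_mul_integral_of_sq_le_mul (hp.add hq)
          (integrable_sq_sub_div_add hp hq hp0 hq0) (hp.sub hq).abs hadd0 ?_ ?_
        · filter_upwards [hadd0] with ω hω using div_nonneg (sq_nonneg _) hω
        · filter_upwards [hp0, hq0] with ω hpω hqω
          rw [sq_abs, add_mul_sq_sub_div_add hpω hqω]
    _ = 2 * ((∫ ω, p ω ∂μ) + ∫ ω, q ω ∂μ) * triangularDiscrimination μ p q := by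
        rw [integral_add hp hq, triangularDiscrimination]
        ring

variable {E : Type*} [NormedAddCommGroup E] [NormedSpace ℝ E] {X : Ω → E} {M : ℝ}

theorem norm_integral_smul_sub_integral_smul_le (hpq : Integrable (fun ω ↦ p ω - q ω) μ)
    (hXp : Integrable (fun ω ↦ p ω • X ω) μ) (hXq : Integrable (fun ω ↦ q ω • X ω) μ)
    (hXM : ∀ᵐ ω ∂μ, ‖X ω‖ ≤ M) :
    ‖(∫ ω, p ω • X ω ∂μ) - ∫ ω, q ω • X ω ∂μ‖ ≤ M * ∫ ω, |p ω - q ω| ∂μ := by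
  rw [← integral_sub hXp hXq, ← integral_const_mul]
  refine norm_integral_le_of_norm_le (hpq.abs.const_mul M) ?_
  filter_upwards [hXM] with ω hω
  rw [← sub_smul, norm_smul, Real.norm_eq_abs, mul_comm]
  gcongr

theorem expectation_diff_le_sqrt_triangular_general
    (hp : Integrable p μ) (hq : Integrable q μ) (hp0 : 0 ≤ᵐ[μ] p) (hq0 : 0 ≤ᵐ[μ] q)
    (hXp : Integrable (fun ω ↦ p ω • X ω) μ) (hXq : Integrable (fun ω ↦ q ω • X ω) μ)
    (hXM : ∀ᵐ ω ∂μ, ‖X ω‖ ≤ M) :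
    ‖(∫ ω, p ω • X ω ∂μ) - ∫ ω, q ω • X ω ∂μ‖ ≤
      2 * M * √(((∫ ω, p ω ∂μ) + ∫ ω, q ω ∂μ) / 2 * triangularDiscrimination μ p q) := by
  rcases eq_zero_or_neZero μ with rfl | _
  · simp
  obtain ⟨ω, hω⟩ := hXM.exists
  have hM : 0 ≤ M := (norm_nonneg _).trans hω
  have hL1 : (∫ ω, |p ω - q ω| ∂μ) / 2 ≤
      √(((∫ ω, p ω ∂μ) + ∫ ω, q ω ∂μ) / 2 * triangularDiscrimination μ p q) := by
    apply Real.le_sqrt_of_sq_le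
    linarith [sq_integral_abs_sub_le_mul_triangularDiscrimination hp hq hp0 hq0]
  calc ‖(∫ ω, p ω • X ω ∂μ) - ∫ ω, q ω • X ω ∂μ‖
      ≤ M * ∫ ω, |p ω - q ω| ∂μ :=
        norm_integral_smul_sub_integral_smul_le (hp.sub hq) hXp hXq hXM
    _ = 2 * M * ((∫ ω, |p ω - q ω| ∂μ) / 2) := by ring
    _ ≤ _ := by gcongr

end

theorem expectation_diff_le_sqrt_triangular {Ω : Type*} [MeasurableSpace Ω]
    (μ : Measure Ω)
    (p q X : Ω → ℝ) (hp : Measurable p) (hq : Measurable q) (hX : Measurable X)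
    (hppos : ∀ ω, 0 < p ω) (hqpos : ∀ ω, 0 < q ω)
    (hpint : ∫ ω, p ω ∂μ = 1) (hqint : ∫ ω, q ω ∂μ = 1)
    (hΔint : Integrable (fun ω => (p ω - q ω) ^ 2 / (p ω + q ω)) μ)
    (M : ℝ) (hXM : ∀ ω, |X ω| ≤ M)
    (hXp : Integrable (fun ω => X ω * p ω) μ)
    (hXq : Integrable (fun ω => X ω * q ω) μ) :
    |(∫ ω, X ω * p ω ∂μ) - ∫ ω, X ω * q ω ∂μ| ≤
      2 * M * Real.sqrt ((1 / 2) * ∫ ω, (p ω - q ω) ^ 2 / (p ω + q ω) ∂μ) := by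
  have hpi : Integrable p μ := .of_integral_ne_zero (by simp [hpint])
  have hqi : Integrable q μ := .of_integral_ne_zero (by simp [hqint])
  simp only [mul_comm (X _)] at hXp hXq ⊢
  simpa [triangularDiscrimination, hpint, hqint] using
    expectation_diff_le_sqrt_triangular_general hpi hqi (.of_forall fun ω ↦ (hppos ω).le)
      (.of_forall fun ω ↦ (hqpos ω).le) hXp hXq (.of_forall hXM)
end

section
/- Let f : ℝ → ℝ be twice continuously differentiable on (0,∞) with f''(x) > 0 for all x > 0 and f(1) = 0, and define d_f(s) = ((1-s)/2)·f((1+s)/(1-s)) + ((1+s)/2)·f((1-s)/(1+s)) for s ∈ [0,1). Then d_f(s)/s² tends to 2·f''(1) as s tends to 0 from the right: Tendsto (fun s => d_f(s)/s²) (𝓝[>] 0) (𝓝 (2·f''(1))). -/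
/-!
Since `f 1 = 0`, the values of `f` are slopes based at `1` times the distance to `1`: with
`F = dslope f 1` the weights cancel and
`binDiv f s = s * (F ((1 + s) / (1 - s)) - F ((1 - s) / (1 + s)))`.
By the second-order Taylor expansion of `f` at `1`, the derivative of `F` there is half the second
derivative of `f`. The two arguments of `F` leave `1` with velocities `2` and `-2`, so the
difference is `4 * deriv F 1 * s + o(s)`.
-/

open Asymptotics Filter Topology

section Taylor

variable {E : Type*} [NormedAddCommGroup E] [NormedSpace ℝ E] {f f' : ℝ → E} {f'' : E} {a : ℝ}

theorem isLittleO_sub_taylor_two (hf : ∀ᶠ x in 𝓝 a, HasDerivAt f (f' x) x)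
    (hf' : HasDerivAt f' f'' a) :
    (fun x ↦ f x - f a - (x - a) • f' a - ((x - a) ^ 2 / 2) • f'') =o[𝓝 a]
      fun x ↦ (x - a) ^ 2 := by
  obtain ⟨ε, hε, hball⟩ := Metric.eventually_nhds_iff_ball.1 hf
  have ha : a ∈ Metric.ball a ε := Metric.mem_ball_self hε
  have hderiv : ∀ x ∈ Metric.ball a ε,
      HasDerivWithinAt (fun x ↦ f x - f a - (x - a) • f' a - ((x - a) ^ 2 / 2) • f'')
        (f' x - f' a - (x - a) • f'') (Metric.ball a ε) x := by
    intro x hx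
    have hlin : HasDerivAt (fun x ↦ x - a) 1 x := (hasDerivAt_id x).sub_const a
    have hquad : HasDerivAt (fun x ↦ (x - a) ^ 2 / 2) (x - a) x := by
      simpa using (hlin.fun_pow 2).div_const 2
    simpa only [one_smul] using ((((hball x hx).sub_const (f a)).fun_sub
      (hlin.smul_const (f' a))).fun_sub (hquad.smul_const f'')).hasDerivWithinAt
  have hrem := (convex_ball a ε).isLittleO_pow_succ_real (n := 1) ha hderiv <| by
    simpa only [pow_one] using hf'.isLittleO.mono nhdsWithin_le_nhds
  simpa [Metric.isOpen_ball.nhdsWithin_eq ha] using hrem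

theorem hasDerivAt_dslope_same (hf : ∀ᶠ x in 𝓝 a, HasDerivAt f (f' x) x)
    (hf' : HasDerivAt f' f'' a) : HasDerivAt (dslope f a) ((2⁻¹ : ℝ) • f'') a := by
  have hquot := (isBigO_refl (fun x ↦ (x - a)⁻¹) (𝓝 a)).smul_isLittleO
    (isLittleO_sub_taylor_two hf hf')
  have hcancel (x : ℝ) : (x - a)⁻¹ • (x - a) ^ 2 = x - a := by
    rw [smul_eq_mul, sq, ← mul_assoc, inv_mul_mul_self]
  refine .of_isLittleO <| hquot.congr (fun x ↦ ?_) hcancel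
  obtain rfl | hx := eq_or_ne x a
  · simp
  · rw [inv_smul_eq_iff₀ (sub_ne_zero.2 hx), smul_sub, smul_sub, sub_smul_dslope, dslope_same,
      hf.self_of_nhds.deriv]
    module

end Taylor

section Moebius

variable {𝕜 : Type*} [NontriviallyNormedField 𝕜] {s : 𝕜}

theorem hasDerivAt_one_add_div_one_sub (hs : 1 - s ≠ 0) :
    HasDerivAt (fun s ↦ (1 + s) / (1 - s)) (2 / (1 - s) ^ 2) s :=
  (((hasDerivAt_id' s).const_add 1).fun_div ((hasDerivAt_id' s).const_sub 1) hs).congr_deriv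
    (by ring)

theorem hasDerivAt_one_sub_div_one_add (hs : 1 + s ≠ 0) :
    HasDerivAt (fun s ↦ (1 - s) / (1 + s)) (-2 / (1 + s) ^ 2) s :=
  (((hasDerivAt_id' s).const_sub 1).fun_div ((hasDerivAt_id' s).const_add 1) hs).congr_deriv
    (by ring)

end Moebius

section BinDiv

variable {f : ℝ → ℝ}

theorem binDiv_eq_mul_dslope_sub_dslope (hf1 : f 1 = 0) {s : ℝ} (hsub : 1 - s ≠ 0)
    (hadd : 1 + s ≠ 0) :
    binDiv f s = s * (dslope f 1 ((1 + s) / (1 - s)) - dslope f 1 ((1 - s) / (1 + s))) := by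
  rw [binDiv, ← sub_smul_dslope_of_zero hf1 ((1 + s) / (1 - s)),
    ← sub_smul_dslope_of_zero hf1 ((1 - s) / (1 + s)), smul_eq_mul, smul_eq_mul]
  field_simp
  ring

theorem tendsto_binDiv_div_sq {c : ℝ} (hf1 : f 1 = 0) (hc : HasDerivAt (dslope f 1) c 1) :
    Tendsto (fun s ↦ binDiv f s / s ^ 2) (𝓝[≠] 0) (𝓝 (4 * c)) := by
  have hdiff : HasDerivAt
      (fun s ↦ dslope f 1 ((1 + s) / (1 - s)) - dslope f 1 ((1 - s) / (1 + s))) (4 * c) 0 :=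
    ((hc.comp_of_eq 0 (hasDerivAt_one_add_div_one_sub (by norm_num)) (by norm_num)).fun_sub
      (hc.comp_of_eq 0 (hasDerivAt_one_sub_div_one_add (by norm_num)) (by norm_num))).congr_deriv
      (by ring)
  have hsub : ∀ᶠ s : ℝ in 𝓝[≠] 0, 1 - s ≠ 0 :=
    (ContinuousAt.eventually_ne (by fun_prop) (by norm_num)).filter_mono nhdsWithin_le_nhds
  have hadd : ∀ᶠ s : ℝ in 𝓝[≠] 0, 1 + s ≠ 0 :=
    (ContinuousAt.eventually_ne (by fun_prop) (by norm_num)).filter_mono nhdsWithin_le_nhds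
  refine hdiff.tendsto_slope.congr' ?_
  filter_upwards [self_mem_nhdsWithin, hsub, hadd] with s hs hs_sub hs_add
  rw [binDiv_eq_mul_dslope_sub_dslope hf1 hs_sub hs_add, sq, mul_div_mul_left _ _ hs,
    slope_def_field]
  simp

theorem binDiv_asymptotic_general (hf : ∀ᶠ x in 𝓝 1, DifferentiableAt ℝ f x)
    (hf' : DifferentiableAt ℝ (deriv f) 1) (hf1 : f 1 = 0) :
    Tendsto (fun s ↦ binDiv f s / s ^ 2) (𝓝[≠] 0) (𝓝 (2 * deriv (deriv f) 1)) := by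
  have hslope : HasDerivAt (dslope f 1) ((2⁻¹ : ℝ) • deriv (deriv f) 1) 1 :=
    hasDerivAt_dslope_same (hf.mono fun _ hx ↦ hx.hasDerivAt) hf'.hasDerivAt
  convert tendsto_binDiv_div_sq hf1 hslope using 2
  rw [smul_eq_mul]
  ring

end BinDiv

theorem binDiv_asymptotic (f : ℝ → ℝ)
    (hf : ContDiffOn ℝ 2 f (Set.Ioi 0))
    (hf'' : ∀ x : ℝ, 0 < x → 0 < deriv (deriv f) x)
    (hf1 : f 1 = 0) :
    Filter.Tendsto (fun s : ℝ => binDiv f s / s ^ 2)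
      (nhdsWithin 0 (Set.Ioi 0)) (nhds (2 * deriv (deriv f) 1)) := by
  have hdiff : ∀ᶠ x in 𝓝 1, DifferentiableAt ℝ f x :=
    (hf.differentiableOn two_ne_zero).eventually_differentiableAt (Ioi_mem_nhds one_pos)
  have hderiv : DifferentiableAt ℝ (deriv f) 1 :=
    ((hf.contDiffAt (Ioi_mem_nhds one_pos)).derivWithin one_add_one_eq_two.le).differentiableAt
      one_ne_zero
  exact (binDiv_asymptotic_general hdiff hderiv hf1).mono_left (nhdsGT_le_nhdsNE 0)
end
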